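/- Let d ≥ 0 and let G be a group of order 2^{2d+2} containing a normal subgroup isomorphic to C₂^{d+1}. Then G contains a Hadamard difference set. -/

import Mathlib

/-!
Identify `E` with an `𝔽₂`-space `K`. Assign to every character `ψ` of `E` a representative `t ψ` of a
coset of `E`, bijectively (there are `2 ^ (d + 1)` of both), and let `F (t ψ * e) = (-1) ^ ψ e`. The
set where `F = -1` is a Hadamard difference set as soon as `∑ y, F (a * y) * F y = 0` for all `a ≠ 1`
(`isHadamardGroup_of_autocorrelation`). For `a ∉ E` this is orthogonality of distinct characters.
For `a ∈ E` the sum is `|E|` times the sum over `ψ` of the values at `a` of the characters `ψ`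
conjugated by `t ψ`, which vanishes if `ψ ↦ t ψ • ψ` is a permutation of the dual of `E`.

It remains to choose `t` with this property (`exists_transversal_rep`). The 2-group `G` stabilizes a
full flag of subspaces in the dual of `E`. Its successive differences, from the top, have sizes
`n / 2, n / 4, …, 1, 1`, where `n` is the number of available cosets. On each difference the
elements of `G` act by permutations, and at the stage where `m` points are to be treated there are
at least `2m - 1` cosets left. Drisko's theorem (`drisko`) then provides distinct cosets for these
points with distinct images. That theorem is proved by enlarging a partial transversal along
alternating paths whose new cells lie in distinct unused rows (`IsPartialTransversal.reach`).
-/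

/-- `D` is a Hadamard difference set in the finite group `G`: for some `k`, `l`,
`D` is a `(v,k,l)`-difference set (every non-identity `g` has exactly `l`
representations `x * y⁻¹` with `x, y ∈ D`) whose parameters satisfy `v = 4 * (k - l)`. -/
def IsHadamardDiffSet {G : Type*} [Group G] (D : Set G) : Prop :=
  ∃ k l : ℕ,
    Nat.card D = k ∧
    (∀ g : G, g ≠ 1 → Nat.card {p : D × D // (p.1 : G) * (p.2 : G)⁻¹ = g} = l) ∧
    Nat.card G + 4 * l = 4 * k

/-- A group is a Hadamard group if it contains a Hadamard difference set. -/
def IsHadamardGroup (G : Type*) [Group G] : Prop :=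
  ∃ D : Set G, IsHadamardDiffSet D

/-! ### Transversals in row-Latin rectangles -/

/-- A partial transversal of the array whose rows are indexed by `ι`, whose columns are indexed by
`X`, and whose entry in row `c` and column `x` is the symbol `σ c x`: a set of cells `(c, x)` no
two of which share a row, a column or a symbol. -/
structure IsPartialTransversal {ι X : Type*} (σ : ι → X → X) (P : Finset (ι × X)) : Prop where
  row : Set.InjOn Prod.fst (P : Set (ι × X))
  col : Set.InjOn Prod.snd (P : Set (ι × X))
  sym : Set.InjOn (fun e : ι × X => σ e.1 e.2) (P : Set (ι × X))

lemma IsPartialTransversal.mono {ι X : Type*} {σ : ι → X → X} {P Q : Finset (ι × X)}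
    (h : IsPartialTransversal σ P) (hQ : Q ⊆ P) : IsPartialTransversal σ Q :=
  ⟨h.row.mono (by exact_mod_cast hQ), h.col.mono (by exact_mod_cast hQ),
    h.sym.mono (by exact_mod_cast hQ)⟩

section
variable {ι X : Type*} [DecidableEq ι] [DecidableEq X] {σ : ι → X → X}

lemma IsPartialTransversal.insert_edge {P : Finset (ι × X)} (h : IsPartialTransversal σ P) {t : ι} {a : X}
    (ht : t ∉ P.image Prod.fst) (ha : a ∉ P.image Prod.snd)
    (hb : σ t a ∉ P.image (fun e => σ e.1 e.2)) : IsPartialTransversal σ (insert (t, a) P) := by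
  have hm : (t, a) ∉ (P : Set (ι × X)) := fun hh => ht (Finset.mem_image.2 ⟨_, hh, rfl⟩)
  refine ⟨?_, ?_, ?_⟩ <;> rw [Finset.coe_insert, Set.injOn_insert hm]
  · exact ⟨h.row, by simpa using ht⟩
  · exact ⟨h.col, by simpa using ha⟩
  · exact ⟨h.sym, by simpa using hb⟩

/-- One augmentation argument. Let `P` be a partial transversal missing some column, and `J` a set
of rows not used by `P`. Either `P` can be enlarged by one cell using the rows in `J`, or there is a
set `R` of `|J|` cells of `P` such that every column `a` not covered by `P \ R` can be freed:
some partial transversal `P'` of the same size, with the same symbols and containing `P \ R`, uses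
only the rows of `P` and `J` and avoids the column `a`. In the language of matchings between columns
and symbols, `R` consists of the edges reached by alternating paths from uncovered columns whose
edges outside `P` come from distinct rows in `J`. -/
lemma IsPartialTransversal.reach [Fintype X] (hσ : ∀ c, Function.Injective (σ c))
    {P : Finset (ι × X)} (hP : IsPartialTransversal σ P)
    (hlt : P.card < Fintype.card X)
    (J : Finset ι) (hJ : Disjoint J (P.image Prod.fst)) :
    (∃ P', IsPartialTransversal σ P' ∧ P'.card = P.card + 1 ∧
      P'.image Prod.fst ⊆ P.image Prod.fst ∪ J) ∨
    ∃ R ⊆ P, R.card = J.card ∧ ∀ a, a ∉ (P \ R).image Prod.snd →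
      ∃ P', IsPartialTransversal σ P' ∧ P'.card = P.card ∧
        P'.image Prod.fst ⊆ P.image Prod.fst ∪ J ∧
        P'.image (fun e => σ e.1 e.2) = P.image (fun e => σ e.1 e.2) ∧ P \ R ⊆ P' ∧
        a ∉ P'.image Prod.snd := by
  induction J using Finset.induction_on with
  | empty =>
    refine Or.inr ⟨∅, by simp, rfl, fun a ha =>
      ⟨P, hP, rfl, by simp, rfl, by simp, by simpa using ha⟩⟩
  | insert t J htJ ih =>
    rw [Finset.disjoint_insert_left] at hJ
    have hsub : P.image Prod.fst ∪ J ⊆ P.image Prod.fst ∪ insert t J :=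
      Finset.union_subset_union_right (Finset.subset_insert _ _)
    rcases ih hJ.2 with ⟨P', h1, h2, h3⟩ | ⟨R, hRP, hRc, hR⟩
    · exact Or.inl ⟨P', h1, h2, h3.trans hsub⟩
    -- More than `|R|` columns can be freed, so the row `t` sends one of them, `a`, to a symbol
    -- outside those of `R`.
    obtain ⟨a, ha, hb⟩ : ∃ a, a ∉ (P \ R).image Prod.snd ∧
        σ t a ∉ R.image (fun e => σ e.1 e.2) := by
      by_contra! hcon
      have h1 : ((((P \ R).image Prod.snd)ᶜ).image (σ t)).card ≤
          (R.image (fun e => σ e.1 e.2)).card := by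
        apply Finset.card_le_card
        intro b hb
        obtain ⟨a, ha, rfl⟩ := Finset.mem_image.1 hb
        exact hcon a (Finset.mem_compl.1 ha)
      rw [Finset.card_image_of_injective _ (hσ t), Finset.card_compl] at h1
      have h2 := Finset.card_image_le (s := R) (f := fun e => σ e.1 e.2)
      have h3 := Finset.card_image_le (s := P \ R) (f := Prod.snd)
      have h4 := Finset.card_sdiff_add_card_eq_card hRP
      omega
    obtain ⟨P', hP', hc, hcol, hsym, hPR, haP'⟩ := hR a ha
    have ht : t ∉ P'.image Prod.fst := by
      intro h
      rcases Finset.mem_union.1 (hcol h) with h | h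
      · exact hJ.1 h
      · exact htJ h
    have hta : (t, a) ∉ P' := fun hh => ht (Finset.mem_image.2 ⟨_, hh, rfl⟩)
    by_cases hbP : σ t a ∈ P.image (fun e => σ e.1 e.2)
    · -- The symbol of `(t, a)` is held by a cell `e` of `P \ R`; exchanging `e` for `(t, a)` frees
      -- the column of `e`, so `e` joins `R`.
      right
      obtain ⟨e, heP, heb⟩ := Finset.mem_image.1 hbP
      have heR : e ∉ R := fun h => hb (Finset.mem_image.2 ⟨e, h, heb⟩)
      have heP' : e ∈ P' := hPR (Finset.mem_sdiff.2 ⟨heP, heR⟩)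
      have hte : t ∉ (P'.erase e).image Prod.fst := fun h =>
        ht (Finset.image_subset_image (Finset.erase_subset _ _) h)
      have hae : a ∉ (P'.erase e).image Prod.snd := fun h =>
        haP' (Finset.image_subset_image (Finset.erase_subset _ _) h)
      have hse : σ t a ∉ (P'.erase e).image (fun e => σ e.1 e.2) := by
        intro h
        obtain ⟨e', he', h'⟩ := Finset.mem_image.1 h
        rw [Finset.mem_erase] at he'
        exact he'.1 (hP'.sym he'.2 heP' (h'.trans heb.symm))
      refine ⟨insert e R, Finset.insert_subset heP hRP, ?_, ?_⟩
      · rw [Finset.card_insert_of_notMem heR, Finset.card_insert_of_notMem htJ, hRc]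
      intro x hx
      by_cases hxe : x = e.2
      · refine ⟨insert (t, a) (P'.erase e), (hP'.mono (Finset.erase_subset _ _)).insert_edge hte hae hse,
          ?_, ?_, ?_, ?_, ?_⟩
        · rw [Finset.card_insert_of_notMem (fun h => hta (Finset.mem_of_mem_erase h)),
            Finset.card_erase_add_one heP', hc]
        · rw [Finset.image_insert]
          refine Finset.insert_subset (by simp) ?_
          exact ((Finset.image_subset_image (Finset.erase_subset _ _)).trans hcol).trans hsub
        · rw [← hsym, Finset.image_insert]
          conv_rhs => rw [← Finset.insert_erase heP', Finset.image_insert]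
          simp only [heb]
        · intro y hy
          simp only [Finset.mem_sdiff, Finset.mem_insert, not_or] at hy
          exact Finset.mem_insert_of_mem (Finset.mem_erase.2 ⟨hy.2.1,
            hPR (Finset.mem_sdiff.2 ⟨hy.1, hy.2.2⟩)⟩)
        · rw [Finset.image_insert, Finset.mem_insert, not_or]
          refine ⟨?_, ?_⟩
          · rintro rfl
            exact haP' (Finset.mem_image.2 ⟨e, heP', hxe.symm⟩)
          · intro h
            obtain ⟨e', he', h'⟩ := Finset.mem_image.1 h
            rw [Finset.mem_erase] at he'
            exact he'.1 (hP'.col he'.2 heP' (h'.trans hxe))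
      · have hx' : x ∉ (P \ R).image Prod.snd := by
          intro h
          obtain ⟨y, hy, rfl⟩ := Finset.mem_image.1 h
          apply hx
          refine Finset.mem_image.2 ⟨y, ?_, rfl⟩
          rw [Finset.mem_sdiff] at hy ⊢
          refine ⟨hy.1, fun h => ?_⟩
          rcases Finset.mem_insert.1 h with rfl | h
          · exact hxe rfl
          · exact hy.2 h
        obtain ⟨Q, q1, q2, q3, q4, q5, q6⟩ := hR x hx'
        exact ⟨Q, q1, q2, q3.trans hsub, q4,
          (Finset.sdiff_subset_sdiff le_rfl (Finset.subset_insert _ _)).trans q5, q6⟩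
    · -- The symbol of `(t, a)` is new, so `(t, a)` can be added.
      left
      refine ⟨insert (t, a) P', hP'.insert_edge ht haP' (hsym ▸ hbP), ?_, ?_⟩
      · rw [Finset.card_insert_of_notMem hta, hc]
      · rw [Finset.image_insert]
        exact Finset.insert_subset (by simp) (hcol.trans hsub)

/-- A partial transversal with `k < |X|` cells leaves at least `k + 1` rows of `C` unused, and
`IsPartialTransversal.reach` cannot produce `k + 1` cells `R` inside it, so it can be enlarged. -/
lemma exists_IsPartialTransversal [Fintype X] (hσ : ∀ c, Function.Injective (σ c)) (C : Finset ι)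
    (hC : 2 * Fintype.card X ≤ C.card + 1) (k : ℕ) (hk : k ≤ Fintype.card X) :
    ∃ P, IsPartialTransversal σ P ∧ P.card = k ∧ P.image Prod.fst ⊆ C := by
  induction k with
  | zero => exact ⟨∅, ⟨by simp, by simp, by simp⟩, rfl, by simp⟩
  | succ k ih =>
    obtain ⟨P, hP, hPk, hPC⟩ := ih (by omega)
    have h1 : k + 1 ≤ (C \ P.image Prod.fst).card := by
      have h2 := Finset.card_sdiff_add_card_eq_card hPC
      have h3 := Finset.card_image_le (s := P) (f := Prod.fst)
      omega
    obtain ⟨J, hJ, hJc⟩ := Finset.exists_subset_card_eq h1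
    rcases hP.reach hσ (by omega) J (Finset.disjoint_of_subset_left hJ Finset.sdiff_disjoint) with
      ⟨P', h1, h2, h3⟩ | ⟨R, hR, hRc, -⟩
    · exact ⟨P', h1, by omega,
        h3.trans (Finset.union_subset hPC (hJ.trans Finset.sdiff_subset))⟩
    · have := Finset.card_le_card hR
      omega

/-- Drisko's theorem: a row-Latin array with `n` columns, `n` symbols and at least `2n - 1` rows
(those in `C`) has a transversal meeting every column. -/
lemma drisko [Fintype X] (hσ : ∀ c, Function.Injective (σ c)) (C : Finset ι)
    (hC : 2 * Fintype.card X ≤ C.card + 1) :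
    ∃ g : X → ι, Function.Injective g ∧ (∀ x, g x ∈ C) ∧
      Function.Injective fun x => σ (g x) x := by
  obtain ⟨P, hP, hPk, hPC⟩ := exists_IsPartialTransversal hσ C hC _ le_rfl
  have huniv : P.image Prod.snd = Finset.univ := by
    rw [← Finset.card_eq_iff_eq_univ, Finset.card_image_of_injOn hP.col, hPk]
  have hex : ∀ x, ∃ c, (c, x) ∈ P := by
    intro x
    have hx := Finset.mem_univ x
    rw [← huniv] at hx
    obtain ⟨⟨c, y⟩, h, rfl⟩ := Finset.mem_image.1 hx
    exact ⟨c, h⟩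
  choose g hg using hex
  refine ⟨g, fun x y h => ?_, fun x => hPC (Finset.mem_image.2 ⟨_, hg x, rfl⟩), fun x y h => ?_⟩
  · exact congrArg Prod.snd (hP.row (hg x) (hg y) h)
  · exact congrArg Prod.snd (hP.sym (hg x) (hg y) h)

end

/-! ### Transversals for linear actions of 2-groups -/

lemma natCard_dual {V : Type*} [AddCommGroup V] [Module (ZMod 2) V] [Finite V] :
    Nat.card (Module.Dual (ZMod 2) V) = Nat.card V := by
  have : Finite (Module.Dual (ZMod 2) V) := Module.finite_of_finite (ZMod 2)
  rw [Module.natCard_eq_pow_finrank (K := ZMod 2), Subspace.dual_finrank_eq,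
    ← Module.natCard_eq_pow_finrank]

/-- The zero functional is fixed and the dual has even order, so there is a second fixed point. -/
lemma exists_fixed_dual {Q V : Type*} [Group Q] (hQ : IsPGroup 2 Q)
    [AddCommGroup V] [Module (ZMod 2) V] [Finite V] [Nontrivial V]
    (ρ : Representation (ZMod 2) Q V) :
    ∃ f : Module.Dual (ZMod 2) V, f ≠ 0 ∧ ∀ g x, f (ρ g x) = f x := by
  let _ : MulAction Q (Module.Dual (ZMod 2) V) :=
    { smul := fun g f => ρ.dual g f
      one_smul := fun f => by change ρ.dual 1 f = f; rw [map_one]; rfl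
      mul_smul := fun g h f => by
        change ρ.dual (g * h) f = ρ.dual g (ρ.dual h f)
        rw [map_mul]; rfl }
  have hsmul : ∀ (g : Q) (f : Module.Dual (ZMod 2) V), g • f = ρ.dual g f := fun _ _ => rfl
  have : Finite (Module.Dual (ZMod 2) V) := Module.finite_of_finite (ZMod 2)
  have : Fact (Nat.Prime 2) := ⟨Nat.prime_two⟩
  have hcard : 2 ∣ Nat.card (Module.Dual (ZMod 2) V) := by
    rw [natCard_dual, Module.natCard_eq_pow_finrank (K := ZMod 2), Nat.card_zmod]
    exact dvd_pow_self _ (Module.finrank_pos).ne'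
  obtain ⟨f, hf, hf0⟩ := hQ.exists_fixed_point_of_prime_dvd_card_of_fixed_point
    (Module.Dual (ZMod 2) V) hcard (a := 0) (fun g => by rw [hsmul]; simp)
  refine ⟨f, hf0.symm, fun g x => ?_⟩
  have h := congrArg (fun φ : Module.Dual (ZMod 2) V => φ x) (hf g⁻¹)
  simpa [hsmul, Module.Dual.transpose_apply] using h

/-- For a 2-group acting linearly on a finite `𝔽₂`-space `V` and a set `C` of `|V|` group elements,
one can match vectors `x` with elements `g x` of `C` so that `x ↦ g x • x` is a permutation. There is
an invariant hyperplane; its complement has `|V| / 2` points, so `drisko` with the `|V|` rows `C`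
applies to it, and the remaining `|V| / 2` rows serve the hyperplane by induction. -/
lemma exists_transversal_rep {Q : Type*} [Group Q] (hQ : IsPGroup 2 Q) (n : ℕ) :
    ∀ (V : Type*) [AddCommGroup V] [Module (ZMod 2) V] [Finite V]
      (ρ : Representation (ZMod 2) Q V) (C : Finset Q), Nat.card V = n → C.card = n →
      ∃ g : V → Q, Function.Injective g ∧ (∀ x, g x ∈ C) ∧
        Function.Injective fun x => ρ (g x) x := by
  classical
  induction n using Nat.strong_induction_on with
  | _ n ih =>
  intro V _ _ _ ρ C hV hC
  rcases subsingleton_or_nontrivial V with hs | hs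
  · obtain ⟨c, hc⟩ : C.Nonempty := by
      rw [← Finset.card_pos, hC, ← hV]
      exact Nat.card_pos
    exact ⟨fun _ => c, Function.injective_of_subsingleton _, fun _ => hc,
      Function.injective_of_subsingleton _⟩
  obtain ⟨f, hf0, hf⟩ := exists_fixed_dual hQ ρ
  obtain ⟨x₀, hx₀⟩ : ∃ x, f x ≠ 0 := by
    by_contra! h
    exact hf0 (LinearMap.ext h)
  have htwo : ∀ a b : ZMod 2, a ≠ 0 → (b ≠ 0 ↔ b + a = 0) := by decide
  have htwo' : ∀ a b : ZMod 2, a ≠ 0 → (b = 0 ↔ b + a ≠ 0) := by decide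
  have : Fintype V := Fintype.ofFinite V
  let X := {x : V // f x ≠ 0}
  -- Translation by `x₀` exchanges the hyperplane and its complement.
  have e : f.ker ≃ X := (Equiv.addRight x₀).subtypeEquiv fun x => by
    simpa using htwo' (f x₀) (f x) hx₀
  have hXW : Nat.card f.ker = Nat.card X := Nat.card_congr e
  have hsum : Nat.card V = Nat.card f.ker + Nat.card X := by
    rw [← Nat.card_sum]
    exact Nat.card_congr (Equiv.sumCompl fun x => f x = 0).symm
  have hpos : 0 < Nat.card f.ker := Nat.card_pos
  have hXF : Nat.card X = Fintype.card X := Nat.card_eq_fintype_card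
  obtain ⟨g₁, hg₁, hg₁C, hg₁ρ⟩ := drisko (X := X) (ι := Q)
    (σ := fun c x => ⟨ρ c x.1, by rw [hf]; exact x.2⟩)
    (fun c x y h => Subtype.ext ((ρ.apply_bijective c).1 (congrArg Subtype.val h))) C (by omega)
  have hrest : (C \ Finset.univ.image g₁).card = Nat.card f.ker := by
    have hsub : Finset.univ.image g₁ ⊆ C := by
      intro c hc
      obtain ⟨x, -, rfl⟩ := Finset.mem_image.1 hc
      exact hg₁C x
    have h1 := Finset.card_sdiff_add_card_eq_card hsub
    rw [Finset.card_image_of_injective _ hg₁, Finset.card_univ] at h1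
    omega
  obtain ⟨g₂, hg₂, hg₂C, hg₂ρ⟩ := ih (Nat.card f.ker) (by omega) f.ker
    (ρ.subrepresentation f.ker fun g x hx => by
      simpa [hf] using hx) _ rfl hrest
  have hne : ∀ x y, g₁ x ≠ g₂ y := fun x y h =>
    (Finset.mem_sdiff.1 (hg₂C y)).2 (Finset.mem_image.2 ⟨x, Finset.mem_univ _, h⟩)
  refine ⟨fun x => if h : f x = 0 then g₂ ⟨x, h⟩ else g₁ ⟨x, h⟩, ?_, ?_, ?_⟩
  · intro x y h
    by_cases hx : f x = 0 <;> by_cases hy : f y = 0 <;>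
      simp only [hx, hy, dif_pos, dif_neg, not_false_eq_true] at h
    · exact congrArg Subtype.val (hg₂ h)
    · exact absurd h.symm (hne _ _)
    · exact absurd h (hne _ _)
    · exact congrArg Subtype.val (hg₁ h)
  · intro x
    by_cases hx : f x = 0 <;> simp only [hx, dif_pos, dif_neg, not_false_eq_true]
    · exact (Finset.mem_sdiff.1 (hg₂C _)).1
    · exact hg₁C _
  · intro x y h
    have hxy : f x = f y := by
      have h' := congrArg f h
      simpa only [hf] using h'
    by_cases hx : f x = 0
    · have hy : f y = 0 := hxy ▸ hx
      simp only [hx, hy, dif_pos] at h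
      exact congrArg Subtype.val (@hg₂ρ ⟨x, hx⟩ ⟨y, hy⟩ (Subtype.ext h))
    · have hy : ¬ f y = 0 := hxy ▸ hx
      simp only [hx, hy, dif_neg, not_false_eq_true] at h
      exact congrArg Subtype.val (@hg₁ρ ⟨x, hx⟩ ⟨y, hy⟩ (Subtype.ext h))

/-! ### Signs and difference sets -/

/-- The nontrivial character `𝔽₂ → {1, -1}`, with values in `ℤ`. -/
def sgn (a : ZMod 2) : ℤ := if a = 0 then 1 else -1

lemma sgn_add : ∀ a b, sgn (a + b) = sgn a * sgn b := by decide

lemma sgn_mul_self : ∀ a, sgn a * sgn a = 1 := by decide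

lemma sgn_eq : ∀ a, sgn a = 1 ∨ sgn a = -1 := by decide

lemma sum_sgn_eq_zero {A : Type*} [AddCommGroup A] [Fintype A] (f : A →+ ZMod 2)
    {a : A} (ha : f a ≠ 0) : ∑ x, sgn (f x) = 0 := by
  have h : ∑ x, sgn (f x) = ∑ x, sgn (f (a + x)) :=
    (Equiv.sum_comp (Equiv.addLeft a) fun x => sgn (f x)).symm
  have h1 : sgn (f a) = -1 := if_neg ha
  simp only [map_add, sgn_add, h1, ← Finset.mul_sum] at h
  linarith

/-- A `±1`-valued function with vanishing nontrivial autocorrelations is `1 - 2 · 1_D` for a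
Hadamard difference set `D`: the autocorrelation at `a` is `v - 4k + 4N`, where `N` is the number of
representations of `a` as a quotient of elements of `D`. -/
lemma isHadamardGroup_of_autocorrelation {G : Type*} [Group G] [Fintype G] [Nontrivial G]
    (F : G → ℤ) (hF : ∀ y, F y = 1 ∨ F y = -1)
    (hcor : ∀ a : G, a ≠ 1 → ∑ y, F (a * y) * F y = 0) : IsHadamardGroup G := by
  classical
  let D : Set G := {y | F y = -1}
  have hk : Nat.card D = (Finset.univ.filter fun y => F y = -1).card := by
    rw [Nat.card_eq_fintype_card, Fintype.card_subtype]
    rfl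
  have hN : ∀ a : G, Nat.card {p : D × D // (p.1 : G) * (p.2 : G)⁻¹ = a} =
      (Finset.univ.filter fun y => F (a * y) = -1 ∧ F y = -1).card := by
    intro a
    rw [← Fintype.card_subtype, ← Nat.card_eq_fintype_card]
    refine Nat.card_congr
      { toFun := fun p => ⟨p.1.2, ?_, p.1.2.2⟩
        invFun := fun y => ⟨(⟨a * y, y.2.1⟩, ⟨y, y.2.2⟩), by simp⟩
        left_inv := ?_
        right_inv := fun y => rfl }
    · have h : (p.1.1 : G) = a * p.1.2 := mul_inv_eq_iff_eq_mul.1 p.2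
      rw [← h]
      exact p.1.1.2
    · rintro ⟨⟨x, y⟩, rfl⟩
      simp
  have key : ∀ a : G, a ≠ 1 → Nat.card G +
      4 * Nat.card {p : D × D // (p.1 : G) * (p.2 : G)⁻¹ = a} = 4 * Nat.card D := by
    intro a ha
    have h1 : ∀ y, F (a * y) * F y = 1 - 2 * (if F (a * y) = -1 then 1 else 0)
        - 2 * (if F y = -1 then 1 else 0)
        + 4 * (if F (a * y) = -1 ∧ F y = -1 then 1 else 0) := by
      intro y
      rcases hF (a * y) with h | h <;> rcases hF y with h' | h' <;> rw [h, h'] <;> norm_num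
    have h2 := hcor a ha
    simp only [h1, Finset.sum_add_distrib, Finset.sum_sub_distrib, ← Finset.mul_sum] at h2
    have h3 : (∑ y, if F (a * y) = -1 then (1 : ℤ) else 0) = ∑ y, if F y = -1 then (1 : ℤ) else 0 :=
      Equiv.sum_comp (Equiv.mulLeft a) fun y => if F y = -1 then (1 : ℤ) else 0
    rw [h3] at h2
    simp only [Finset.sum_boole, Finset.sum_const, Finset.card_univ, nsmul_eq_mul, mul_one] at h2
    rw [hk, hN, Nat.card_eq_fintype_card]
    omega
  obtain ⟨a, ha⟩ := exists_ne (1 : G)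
  refine ⟨D, _, Nat.card {p : D × D // (p.1 : G) * (p.2 : G)⁻¹ = a}, rfl, fun b hb => ?_, key a ha⟩
  have h1 := key a ha
  have h2 := key b hb
  omega

/-! ### The construction -/

/-- The conjugation action of `G` on its normal subgroup `E`, as a representation on the
`𝔽₂`-space `K` identified with `E` through `φ`. -/
def conjRep {G K : Type*} [Group G] (E : Subgroup G) [E.Normal] [AddCommGroup K]
    [Module (ZMod 2) K] (φ : E ≃* Multiplicative K) : Representation (ZMod 2) G K where
  toFun g := AddMonoidHom.toZModLinearMap 2
    { toFun := fun k => (φ (MulAut.conjNormal g (φ.symm (Multiplicative.ofAdd k)))).toAdd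
      map_zero' := by simp
      map_add' := fun k l => by simp }
  map_one' := by ext; simp
  map_mul' g h := by ext; simp

lemma conjRep_inv_apply {G K : Type*} [Group G] (E : Subgroup G) [E.Normal] [AddCommGroup K]
    [Module (ZMod 2) K] (φ : E ≃* Multiplicative K) (g : G) (k : K) :
    ((φ.symm (Multiplicative.ofAdd (conjRep E φ g⁻¹ k)) : E) : G) =
      g⁻¹ * (φ.symm (Multiplicative.ofAdd k) : E) * g := by
  simp [conjRep]

/-- A choice of one coset representative `t ψ` of `E` for every character `ψ` of `E`, such that
conjugating each `ψ` by its own `t ψ` permutes the characters. -/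
lemma exists_coset_transversal {G K : Type*} [Group G] [Finite G] (hG : IsPGroup 2 G)
    (E : Subgroup G) [E.Normal] [AddCommGroup K] [Module (ZMod 2) K] [Finite K]
    (φ : E ≃* Multiplicative K) (hidx : E.index = Nat.card K) :
    ∃ t : Module.Dual (ZMod 2) K → G, (∀ ψ χ, (t ψ)⁻¹ * t χ ∈ E → ψ = χ) ∧
      Function.Bijective fun ψ => (conjRep E φ).dual (t ψ) ψ := by
  classical
  have : Finite (Module.Dual (ZMod 2) K) := Module.finite_of_finite (ZMod 2)
  have : Fintype (G ⧸ E) := Fintype.ofFinite _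
  obtain ⟨t, ht, htC, htρ⟩ := exists_transversal_rep hG _ (Module.Dual (ZMod 2) K)
    (conjRep E φ).dual (Finset.univ.image (Quotient.out : G ⧸ E → G)) rfl (by
      rw [Finset.card_image_of_injective _ Quotient.out_injective, Finset.card_univ,
        ← Nat.card_eq_fintype_card, natCard_dual, ← hidx]
      rfl)
  refine ⟨t, fun ψ χ h => ht ?_, Finite.injective_iff_bijective.1 htρ⟩
  obtain ⟨a, -, ha⟩ := Finset.mem_image.1 (htC ψ)
  obtain ⟨b, -, hb⟩ := Finset.mem_image.1 (htC χ)
  have hab : a = b := by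
    rw [← QuotientGroup.out_eq' a, ← QuotientGroup.out_eq' b, ha, hb]
    exact QuotientGroup.eq.2 h
  rw [← ha, ← hb, hab]

/-- The difference set comes from the function `F (t ψ * e) = (-1) ^ ψ e`, where `t` is given by
`exists_coset_transversal`. -/
lemma isHadamardGroup_of_index_eq {G K : Type*} [Group G] [Finite G] [Nontrivial G]
    (hG : IsPGroup 2 G) (E : Subgroup G) [E.Normal] [AddCommGroup K] [Module (ZMod 2) K]
    [Finite K] (φ : E ≃* Multiplicative K) (hidx : E.index = Nat.card K) :
    IsHadamardGroup G := by
  classical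
  obtain ⟨t, ht, htb⟩ := exists_coset_transversal hG E φ hidx
  have : Finite (Module.Dual (ZMod 2) K) := Module.finite_of_finite (ZMod 2)
  have : Fintype (Module.Dual (ZMod 2) K) := Fintype.ofFinite _
  have : Fintype K := Fintype.ofFinite _
  have : Fintype G := Fintype.ofFinite _
  let ι : K → G := fun k => (φ.symm (Multiplicative.ofAdd k) : E)
  have hιE : ∀ k, ι k ∈ E := fun k => (φ.symm (Multiplicative.ofAdd k)).2
  have hιadd : ∀ k l, ι (k + l) = ι k * ι l := fun k l => by simp [ι]
  have hιsurj : ∀ e ∈ E, ∃ k, ι k = e := fun e he => ⟨(φ ⟨e, he⟩).toAdd, by simp [ι]⟩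
  have hιinj : Function.Injective ι := fun k l h => by simpa [ι] using h
  have hιconj : ∀ g k, ι (conjRep E φ g⁻¹ k) = g⁻¹ * ι k * g := conjRep_inv_apply E φ
  -- Every element of `G` is uniquely of the form `t ψ * ι k`, as the `t ψ` represent all cosets.
  have hΦ : Function.Bijective fun p : Module.Dual (ZMod 2) K × K => t p.1 * ι p.2 := by
    rw [Nat.bijective_iff_injective_and_card]
    refine ⟨?_, ?_⟩
    · rintro ⟨ψ, k⟩ ⟨χ, l⟩ h
      simp only at h
      obtain rfl : ψ = χ := ht _ _ (by
        have h' : (t ψ)⁻¹ * t χ = ι k * (ι l)⁻¹ := by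
          rw [eq_mul_inv_iff_mul_eq, mul_assoc, ← h, inv_mul_cancel_left]
        rw [h']
        exact E.mul_mem (hιE k) (E.inv_mem (hιE l)))
      rw [hιinj (mul_left_cancel h)]
    · rw [Nat.card_prod, natCard_dual, ← E.card_mul_index, hidx, Nat.card_congr φ.toEquiv]
      rfl
  let Φ := Equiv.ofBijective _ hΦ
  have hΦap : ∀ ψ k, Φ (ψ, k) = t ψ * ι k := fun _ _ => rfl
  let F : G → ℤ := fun y => sgn ((Φ.symm y).1 (Φ.symm y).2)
  have hF : ∀ ψ k, F (t ψ * ι k) = sgn (ψ k) := by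
    intro ψ k
    simp only [F, ← hΦap, Equiv.symm_apply_apply]
  refine isHadamardGroup_of_autocorrelation F (fun y => sgn_eq _) fun a ha => ?_
  rw [← Equiv.sum_comp Φ, Fintype.sum_prod_type]
  simp only [hΦap, hF]
  by_cases haE : a ∈ E
  · -- Each coset is preserved and contributes `|E|` times the value at `a` of the conjugated
    -- character; these characters run through the whole dual, so the values cancel.
    obtain ⟨α, rfl⟩ := hιsurj a haE
    have hα : α ≠ 0 := by
      rintro rfl
      exact ha (by simp [ι])
    obtain ⟨χ, hχ⟩ : ∃ χ : Module.Dual (ZMod 2) K, χ α ≠ 0 := by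
      by_contra! h
      exact hα ((Module.forall_dual_apply_eq_zero_iff (ZMod 2) α).1 h)
    have hinner : ∀ ψ, ∑ k, F (ι α * (t ψ * ι k)) * sgn (ψ k) =
        Fintype.card K * sgn ((conjRep E φ).dual (t ψ) ψ α) := by
      intro ψ
      have h : ∀ k, F (ι α * (t ψ * ι k)) * sgn (ψ k) =
          sgn ((conjRep E φ).dual (t ψ) ψ α) := by
        intro k
        have h1 : ι α * (t ψ * ι k) = t ψ * ι (conjRep E φ (t ψ)⁻¹ α + k) := by
          rw [hιadd, hιconj]
          group
        rw [h1, hF, map_add, sgn_add, mul_assoc, sgn_mul_self, mul_one]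
        rfl
      simp [h]
    simp only [hinner, ← Finset.mul_sum]
    have hsum : ∑ ψ : Module.Dual (ZMod 2) K, sgn (ψ α) = 0 :=
      sum_sgn_eq_zero (Module.Dual.eval (ZMod 2) K α).toAddMonoidHom (a := χ) hχ
    rw [htb.sum_comp fun ψ : Module.Dual (ZMod 2) K => sgn (ψ α), hsum, mul_zero]
  · -- Each coset is moved to a different one, and distinct characters are orthogonal.
    refine Finset.sum_eq_zero fun ψ _ => ?_
    obtain ⟨⟨χ, l⟩, hχ⟩ := Φ.surjective (a * t ψ)
    rw [hΦap] at hχ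
    have hne : χ ≠ ψ := by
      rintro rfl
      apply haE
      have h1 : a = t χ * ι l * (t χ)⁻¹ := eq_mul_inv_of_mul_eq hχ.symm
      rw [h1]
      exact Subgroup.Normal.conj_mem inferInstance _ (hιE l) _
    obtain ⟨m, hm⟩ : ∃ m, (χ - ψ) m ≠ 0 := by
      by_contra! h
      exact hne (sub_eq_zero.1 (LinearMap.ext h))
    have h : ∀ k, F (a * (t ψ * ι k)) * sgn (ψ k) = sgn (χ l) * sgn ((χ - ψ) k) := by
      intro k
      rw [← mul_assoc, ← hχ, mul_assoc, ← hιadd, hF, map_add, sgn_add, LinearMap.sub_apply,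
        sub_eq_add_neg, ZMod.neg_eq_self_mod_two, sgn_add, mul_assoc]
    simp only [h, ← Finset.mul_sum]
    rw [mul_eq_zero]
    exact Or.inr (sum_sgn_eq_zero (χ - ψ).toAddMonoidHom (a := m) hm)

theorem drisko_corollary {G : Type*} [Group G] [Finite G] (d : ℕ)
    (hG : Nat.card G = 2 ^ (2 * d + 2)) (E : Subgroup G) [E.Normal]
    (hE : Nonempty (E ≃* Multiplicative (Fin (d + 1) → ZMod 2))) :
    IsHadamardGroup G := by
  obtain ⟨φ⟩ := hE
  have hK : Nat.card (Fin (d + 1) → ZMod 2) = 2 ^ (d + 1) := by simp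
  have hEc : Nat.card E = 2 ^ (d + 1) := (Nat.card_congr φ.toEquiv).trans hK
  have hidx : E.index = Nat.card (Fin (d + 1) → ZMod 2) := by
    have h := E.card_mul_index
    rw [hEc, hG, show 2 * d + 2 = (d + 1) + (d + 1) by ring, pow_add 2 (d + 1)] at h
    rw [hK]
    exact Nat.eq_of_mul_eq_mul_left (Nat.two_pow_pos _) h
  have : Nontrivial G := by
    rw [← Finite.one_lt_card_iff_nontrivial, hG]
    exact Nat.one_lt_two_pow (by omega)
  exact isHadamardGroup_of_index_eq (IsPGroup.of_card hG) E φ hidx
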